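/- Every integral lattice L in ℝ^5 with Λ5 ⊆ L is isometric (via a linear isometry of ℝ^5) to one of the eight lattices: Λ5; ⟨Λ5, u1⟩; ⟨Λ5, w⟩; ⟨Λ5, t⟩; ⟨Λ5, u1, u3⟩; ⟨Λ5, u1, f1⟩; ⟨Λ5, w, t⟩; and ⟨Λ5, u1, u3, f1⟩, where u1 = (ε1−ε2)/√2, u3 = (ε3−ε4)/√2, w = (ε1−ε2+ε3−ε4)/√2, t = √2·ε4, f1 = (ε1+ε2)/√2. -/

import Mathlib

noncomputable section

open scoped RealInnerProductSpace

/-- `ℝ^n` with the standard inner product. -/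
abbrev E (n : ℕ) := EuclideanSpace ℝ (Fin n)

/-- The standard basis vector `ε i`. -/
def εv {n : ℕ} (i : Fin n) : E n := EuclideanSpace.single i 1

/-- The vector of `ℝ^n` with the given coordinates. -/
def vec {n : ℕ} (x : Fin n → ℝ) : E n := (WithLp.equiv 2 (Fin n → ℝ)).symm x

/-- The vector of `ℝ^n` with the given integer coordinates. -/
def intVec {n : ℕ} (x : Fin n → ℤ) : E n := (WithLp.equiv 2 (Fin n → ℝ)).symm fun i => (x i : ℝ)

/-- A lattice is integral if all pairwise inner products of its elements are integers. -/
def LatticeIsIntegral {n : ℕ} (L : Submodule ℤ (E n)) : Prop :=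
  ∀ x ∈ L, ∀ y ∈ L, ∃ k : ℤ, ⟪x, y⟫ = (k : ℝ)

/-- Two lattices are isometric if a linear isometry of the ambient space carries
one onto the other. -/
def IsometricLattices {n : ℕ} (L M : Submodule ℤ (E n)) : Prop :=
  ∃ g : E n ≃ₗᵢ[ℝ] E n, g '' (L : Set (E n)) = (M : Set (E n))

/-- The laminated lattice `Λ₅ = {√2·x : x ∈ ℤ⁵, ∑ x i even} ≅ √2·D₅`. -/
def Λ5 : Submodule ℤ (E 5) :=
  Submodule.span ℤ
    {v : E 5 | ∃ x : Fin 5 → ℤ, Even (x 0 + x 1 + x 2 + x 3 + x 4) ∧ v = Real.sqrt 2 • intVec x}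

/-- `u1 = (ε1 - ε2)/√2`. -/
def u1 : E 5 := (Real.sqrt 2)⁻¹ • (εv 0 - εv 1)
/-- `u3 = (ε3 - ε4)/√2`. -/
def u3 : E 5 := (Real.sqrt 2)⁻¹ • (εv 2 - εv 3)
/-- `w = (ε1 - ε2 + ε3 - ε4)/√2`. -/
def w : E 5 := (Real.sqrt 2)⁻¹ • (εv 0 - εv 1 + εv 2 - εv 3)
/-- `t = √2·ε4`. -/
def t : E 5 := Real.sqrt 2 • εv 3
/-- `f1 = (ε1 + ε2)/√2`. -/
def f1 : E 5 := (Real.sqrt 2)⁻¹ • (εv 0 + εv 1)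

/-!
After scaling by `√2`, an integral lattice containing `√2 D_n` becomes a lattice between `2 D_n`
and `ℤ^n`, provided that `8 ∤ n`. Its reduction modulo 2 is a self-orthogonal binary code. If the
lattice contains `2 ℤ^n`, it is Construction A of this code. Otherwise `(∑ i, y i) / 2` modulo 2 is
a linear functional on the code, and changing signs according to this functional turns the lattice
into Construction B of the same code. In dimension 5 there are four self-orthogonal codes up to
permutation of the coordinates, whence the eight lattices.
-/

section Codes

variable {ι K : Type*} [Fintype ι]

/-- A linear code is self-orthogonal if it is contained in its dual code. -/
def IsSelfOrthogonal [CommSemiring K] (C : Submodule K (ι → K)) : Prop :=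
  ∀ c ∈ C, ∀ d ∈ C, c ⬝ᵥ d = 0

theorem IsSelfOrthogonal.map_funCongrLeft {κ : Type*} [Fintype κ] [CommSemiring K]
    {C : Submodule K (ι → K)} (hC : IsSelfOrthogonal C) (σ : κ ≃ ι) :
    IsSelfOrthogonal (C.map (LinearEquiv.funCongrLeft K K σ).toLinearMap) := by
  rintro _ ⟨c, hc, rfl⟩ _ ⟨d, hd, rfl⟩
  exact (comp_equiv_dotProduct_comp_equiv c d σ).trans (hC c hc d hd)

theorem IsSelfOrthogonal.two_mul_finrank_le [Field K] {C : Submodule K (ι → K)}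
    (hC : IsSelfOrthogonal C) : 2 * Module.finrank K C ≤ Fintype.card ι := by
  classical
  have hle : C.map (dotProductEquiv K ι).toLinearMap ≤ C.dualAnnihilator := by
    rintro _ ⟨c, hc, rfl⟩
    exact (Submodule.mem_dualAnnihilator _).2 fun d hd ↦ hC c hc d hd
  have hfinrank := Submodule.finrank_mono hle
  rw [LinearEquiv.finrank_map_eq] at hfinrank
  have hdual := Subspace.finrank_add_finrank_dualAnnihilator_eq C
  rw [Module.finrank_fintype_fun_eq_card] at hdual
  lia

theorem exists_ne_forall_apply_eq [Field K] [Finite K] {C : Submodule K (ι → K)}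
    (h : Nat.card K ^ Module.finrank K C < Fintype.card ι) :
    ∃ i j, i ≠ j ∧ ∀ c ∈ C, c i = c j := by
  let coordinate (i : ι) : Module.Dual K C := (LinearMap.proj i).comp C.subtype
  have hcard : Nat.card (Module.Dual K C) < Nat.card ι := by
    rwa [Module.natCard_eq_pow_finrank (K := K), Subspace.dual_finrank_eq,
      Nat.card_eq_fintype_card (α := ι)]
  have : Finite (Module.Dual K C) := Module.finite_of_finite K
  have hninj : ¬ Function.Injective coordinate := fun hinj ↦
    hcard.not_ge (Nat.card_le_card_of_injective _ hinj)
  obtain ⟨i, j, hij, hne⟩ := Function.not_injective_iff.1 hninj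
  exact ⟨i, j, hne, fun c hc ↦ LinearMap.congr_fun hij ⟨c, hc⟩⟩

theorem IsSelfOrthogonal.sum_eq_zero {C : Submodule (ZMod 2) (ι → ZMod 2)}
    (hC : IsSelfOrthogonal C) {c : ι → ZMod 2} (hc : c ∈ C) : ∑ i, c i = 0 := by
  have hsq (a : ZMod 2) : a * a = a := by revert a; decide
  simpa only [dotProduct, hsq] using hC c hc c hc

theorem eq_zero_or_eq_or_eq_or_eq_add_of_mem_span_pair_zmod_two {V : Type*} [AddCommGroup V]
    [Module (ZMod 2) V] {a b c : V} (hc : c ∈ Submodule.span (ZMod 2) {a, b}) :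
    c = 0 ∨ c = a ∨ c = b ∨ c = a + b := by
  have hscalar (x : ZMod 2) : x = 0 ∨ x = 1 := by revert x; decide
  obtain ⟨x, y, rfl⟩ := Submodule.mem_span_pair.1 hc
  rcases hscalar x with rfl | rfl <;> rcases hscalar y with rfl | rfl <;> simp

theorem eq_of_le_span_pair_zmod_two {V : Type*} [AddCommGroup V] [Module (ZMod 2) V] {a b : V}
    {C : Submodule (ZMod 2) V} (hC : C ≤ Submodule.span (ZMod 2) {a, b}) :
    C = ⊥ ∨ C = Submodule.span (ZMod 2) {a} ∨ C = Submodule.span (ZMod 2) {b} ∨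
      C = Submodule.span (ZMod 2) {a + b} ∨ C = Submodule.span (ZMod 2) {a, b} := by
  have hcases (c : V) (hc : c ∈ C) : c = 0 ∨ c = a ∨ c = b ∨ c = a + b :=
    eq_zero_or_eq_or_eq_or_eq_add_of_mem_span_pair_zmod_two (hC hc)
  have hsub {x y : V} (hx : x ∈ C) (hxy : x + y ∈ C) : y ∈ C := by simpa using sub_mem hxy hx
  simp only [le_antisymm_iff (a := C), Submodule.span_le, Set.insert_subset_iff,
    Set.singleton_subset_iff, SetLike.mem_coe, bot_le, and_true]
  by_cases ha : a ∈ C <;> by_cases hb : b ∈ C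
  · exact .inr <| .inr <| .inr <| .inr ⟨hC, ha, hb⟩
  · refine .inr <| .inl ⟨fun c hc ↦ ?_, ha⟩
    rcases hcases c hc with rfl | rfl | rfl | rfl
    · exact zero_mem _
    · exact Submodule.mem_span_singleton_self c
    · exact absurd hc hb
    · exact absurd (hsub ha hc) hb
  · refine .inr <| .inr <| .inl ⟨fun c hc ↦ ?_, hb⟩
    rcases hcases c hc with rfl | rfl | rfl | rfl
    · exact zero_mem _
    · exact absurd hc ha
    · exact Submodule.mem_span_singleton_self c
    · exact absurd (hsub hb (add_comm a b ▸ hc)) ha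
  · by_cases hab : a + b ∈ C
    · refine .inr <| .inr <| .inr <| .inl ⟨fun c hc ↦ ?_, hab⟩
      rcases hcases c hc with rfl | rfl | rfl | rfl
      · exact zero_mem _
      · exact absurd hc ha
      · exact absurd hc hb
      · exact Submodule.mem_span_singleton_self _
    · refine .inl fun c hc ↦ ?_
      rcases hcases c hc with rfl | rfl | rfl | rfl
      exacts [zero_mem _, absurd hc ha, absurd hc hb, absurd hc hab]

theorem exists_perm_apply_zero_eq_apply_one {C : Submodule (ZMod 2) (Fin 5 → ZMod 2)}
    (hC : IsSelfOrthogonal C) :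
    ∃ σ : Equiv.Perm (Fin 5), ∀ c ∈ C, c (σ 0) = c (σ 1) := by
  have hfinrank : Module.finrank (ZMod 2) C ≤ 2 := by
    have := hC.two_mul_finrank_le
    rw [Fintype.card_fin] at this
    lia
  have hcard : Nat.card (ZMod 2) ^ Module.finrank (ZMod 2) C < Fintype.card (Fin 5) := by
    rw [Nat.card_zmod, Fintype.card_fin]
    exact (Nat.pow_le_pow_right two_pos hfinrank).trans_lt (by norm_num)
  obtain ⟨i, j, hij, heq⟩ := exists_ne_forall_apply_eq hcard
  obtain ⟨σ, rfl, rfl⟩ : ∃ σ : Equiv.Perm (Fin 5), σ 0 = i ∧ σ 1 = j := by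
    have := Equiv.Perm.isMultiplyPretransitive (Fin 5) 2
    obtain ⟨σ, h⟩ := MulAction.is_two_pretransitive_iff.1 this zero_ne_one hij
    exact ⟨σ, h⟩
  exact ⟨σ, heq⟩

theorem apply_eq_zero_of_even_of_orthogonal {x y z : Fin 3 → ZMod 2}
    (hx : ∑ i, x i = 0) (hy : ∑ i, y i = 0) (hz : ∑ i, z i = 0)
    (hxy : x ⬝ᵥ y = 0) (hxz : x ⬝ᵥ z = 0) (hyz : y ⬝ᵥ z = 0) : x 0 = 0 ∨ y 1 = 0 ∨ z 2 = 0 := by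
  simp only [dotProduct, Fin.sum_univ_three] at *
  generalize x 0 = x₀, x 1 = x₁, x 2 = x₂, y 0 = y₀, y 1 = y₁, y 2 = y₂,
    z 0 = z₀, z 1 = z₁, z 2 = z₂ at *
  decide +revert

theorem IsSelfOrthogonal.exists_forall_apply_eq_zero {C : Submodule (ZMod 2) (Fin 3 → ZMod 2)}
    (hC : IsSelfOrthogonal C) : ∃ i, ∀ c ∈ C, c i = 0 := by
  by_contra! h
  choose c hc hne using h
  rcases apply_eq_zero_of_even_of_orthogonal (hC.sum_eq_zero (hc 0)) (hC.sum_eq_zero (hc 1))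
    (hC.sum_eq_zero (hc 2)) (hC _ (hc 0) _ (hc 1)) (hC _ (hc 0) _ (hc 2)) (hC _ (hc 1) _ (hc 2))
    with h | h | h
  exacts [hne 0 h, hne 1 h, hne 2 h]

theorem IsSelfOrthogonal.map_tail_tail {n : ℕ} {C : Submodule (ZMod 2) (Fin (n + 2) → ZMod 2)}
    (hC : IsSelfOrthogonal C) (h01 : ∀ c ∈ C, c 0 = c 1) :
    IsSelfOrthogonal (C.map (LinearMap.funLeft (ZMod 2) (ZMod 2) fun i : Fin n ↦ i.succ.succ)) := by
  rintro _ ⟨c, hc, rfl⟩ _ ⟨d, hd, rfl⟩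
  have hdot := hC c hc d hd
  rw [dotProduct, Fin.sum_univ_succ, Fin.sum_univ_succ, ← add_assoc, Fin.succ_zero_eq_one,
    ← h01 c hc, ← h01 d hd, CharTwo.add_self_eq_zero, zero_add] at hdot
  exact hdot

theorem exists_perm_apply_eq_and_apply_eq_zero {C : Submodule (ZMod 2) (Fin 5 → ZMod 2)}
    (hC : IsSelfOrthogonal C) (h01 : ∀ c ∈ C, c 0 = c 1) :
    ∃ τ : Equiv.Perm (Fin 5), ∀ c ∈ C, c (τ 0) = c (τ 1) ∧ c (τ 2) = c (τ 3) ∧ c (τ 4) = 0 := by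
  have htail := hC.map_tail_tail h01
  have hsum : ∀ c ∈ C, c 2 + c 3 + c 4 = 0 := fun c hc ↦ by
    simpa [Fin.sum_univ_three] using htail.sum_eq_zero (Submodule.mem_map_of_mem hc)
  obtain ⟨i, hi⟩ := htail.exists_forall_apply_eq_zero
  replace hi : ∀ c ∈ C, c i.succ.succ = 0 := fun c hc ↦ hi _ (Submodule.mem_map_of_mem hc)
  fin_cases i
  · refine ⟨Equiv.swap 2 4, fun c hc ↦ ⟨h01 c hc, ?_, hi c hc⟩⟩
    have h2 : c 2 = 0 := hi c hc
    change c 4 = c 3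
    simpa [h2, CharTwo.add_eq_zero, eq_comm (a := c 4)] using hsum c hc
  · refine ⟨Equiv.swap 3 4, fun c hc ↦ ⟨h01 c hc, ?_, hi c hc⟩⟩
    have h3 : c 3 = 0 := hi c hc
    change c 2 = c 4
    simpa [h3, CharTwo.add_eq_zero] using hsum c hc
  · refine ⟨1, fun c hc ↦ ⟨h01 c hc, ?_, hi c hc⟩⟩
    have h4 : c 4 = 0 := hi c hc
    simpa [h4, CharTwo.add_eq_zero] using hsum c hc

theorem exists_perm_map_le_span {C : Submodule (ZMod 2) (Fin 5 → ZMod 2)}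
    (hC : IsSelfOrthogonal C) :
    ∃ σ : Equiv.Perm (Fin 5),
      C.map (LinearEquiv.funCongrLeft (ZMod 2) (ZMod 2) σ).toLinearMap ≤
        Submodule.span (ZMod 2) {![1, 1, 0, 0, 0], ![0, 0, 1, 1, 0]} := by
  obtain ⟨σ, hσ⟩ := exists_perm_apply_zero_eq_apply_one hC
  obtain ⟨τ, hτ⟩ := exists_perm_apply_eq_and_apply_eq_zero (hC.map_funCongrLeft σ)
    (by rintro _ ⟨c, hc, rfl⟩; exact hσ c hc)
  refine ⟨τ.trans σ, ?_⟩
  rintro _ ⟨c, hc, rfl⟩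
  obtain ⟨h01, h23, h4⟩ := hτ _ (Submodule.mem_map_of_mem hc)
  refine Submodule.mem_span_pair.2 ⟨c (σ (τ 0)), c (σ (τ 2)), ?_⟩
  ext i
  fin_cases i
  · simp [LinearMap.funLeft_apply]
  · simpa [LinearMap.funLeft_apply] using h01
  · simp [LinearMap.funLeft_apply]
  · simpa [LinearMap.funLeft_apply] using h23
  · simpa [LinearMap.funLeft_apply] using h4.symm

/-- Representatives for the self-orthogonal binary codes of length 5 up to permutation of the
coordinates. -/
def standardSelfOrthogonalCodes : Set (Submodule (ZMod 2) (Fin 5 → ZMod 2)) :=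
  {⊥, Submodule.span (ZMod 2) {![1, 1, 0, 0, 0]}, Submodule.span (ZMod 2) {![1, 1, 1, 1, 0]},
    Submodule.span (ZMod 2) {![1, 1, 0, 0, 0], ![0, 0, 1, 1, 0]}}

theorem exists_perm_map_mem_standardSelfOrthogonalCodes
    {C : Submodule (ZMod 2) (Fin 5 → ZMod 2)} (hC : IsSelfOrthogonal C) :
    ∃ σ : Equiv.Perm (Fin 5),
      C.map (LinearEquiv.funCongrLeft (ZMod 2) (ZMod 2) σ).toLinearMap ∈
        standardSelfOrthogonalCodes := by
  obtain ⟨σ, hσ⟩ := exists_perm_map_le_span hC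
  rcases eq_of_le_span_pair_zmod_two hσ with h | h | h | h | h
  · exact ⟨σ, .inl h⟩
  · exact ⟨σ, .inr <| .inl h⟩
  · let τ : Equiv.Perm (Fin 5) := Equiv.swap 0 2 * Equiv.swap 1 3
    refine ⟨τ.trans σ, .inr <| .inl ?_⟩
    rw [LinearEquiv.funCongrLeft_comp, LinearEquiv.coe_trans, Submodule.map_comp, h,
      Submodule.map_span, Set.image_singleton]
    congr 2
    decide
  · exact ⟨σ, .inr <| .inr <| .inl (by simpa using h)⟩
  · exact ⟨σ, .inr <| .inr <| .inr h⟩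

end Codes

theorem exists_linearMap_apply_eq_of_ker_le {p : ℕ} [Fact p.Prime] {M V W : Type*}
    [AddCommGroup M] [AddCommGroup V] [Module (ZMod p) V] [AddCommGroup W] [Module (ZMod p) W]
    (f : M →+ V) (g : M →+ W) (h : f.ker ≤ g.ker) :
    ∃ k : V →ₗ[ZMod p] W, ∀ x, k (f x) = g x := by
  let R : Submodule (ZMod p) V := AddSubgroup.toZModSubmodule p f.range
  have hsurj := f.rangeRestrict_surjective
  let k₀ : R →+ W := f.rangeRestrict.liftOfSurjective hsurj ⟨g, by rwa [f.ker_rangeRestrict]⟩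
  obtain ⟨k, hk⟩ := (k₀.toZModLinearMap p).exists_extend
  refine ⟨k, fun x ↦ ?_⟩
  have hkx : k (f x) = k₀ (f.rangeRestrict x) :=
    LinearMap.congr_fun hk (⟨f x, x, rfl⟩ : R)
  rw [hkx]
  exact AddMonoidHom.liftOfRightInverse_comp_apply _ _ _ _ x

section Constructions

variable {ι : Type*}

instance (n : ℕ) : RingHomSurjective (Int.castRingHom (ZMod n)) := ⟨ZMod.intCast_surjective⟩

/-- Reduction modulo 2 from `ℤ^ι` to `𝔽₂^ι`. It is semilinear over `ℤ → 𝔽₂`, so that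
`Submodule.map` sends lattices to binary codes and `Submodule.comap` goes back. -/
def reduction (ι : Type*) : (ι → ℤ) →ₛₗ[Int.castRingHom (ZMod 2)] (ι → ZMod 2) where
  toFun y i := y i
  map_add' x y := by ext i; simp
  map_smul' a y := by ext i; simp

@[simp]
theorem reduction_apply (y : ι → ℤ) (i : ι) : reduction ι y i = y i := rfl

@[simp]
theorem reduction_empty : reduction (Fin 0) ![] = ![] := Subsingleton.elim _ _

@[simp]
theorem reduction_cons {n : ℕ} (a : ℤ) (y : Fin n → ℤ) :
    reduction (Fin (n + 1)) (Matrix.vecCons a y) =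
      Matrix.vecCons (a : ZMod 2) (reduction (Fin n) y) := by
  ext i
  refine Fin.cases ?_ (fun j ↦ ?_) i <;> simp

theorem reduction_eq_zero_iff {y : ι → ℤ} : reduction ι y = 0 ↔ ∀ i, 2 ∣ y i := by
  simp only [funext_iff, reduction_apply, Pi.zero_apply]
  exact forall_congr' fun i ↦ ZMod.intCast_zmod_eq_zero_iff_dvd _ 2

/-- The lattice obtained from a binary code by Conway and Sloane's Construction A, without their
rescaling by `1 / √2`. -/
def constructionA (C : Submodule (ZMod 2) (ι → ZMod 2)) : Submodule ℤ (ι → ℤ) :=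
  C.comap (reduction ι)

@[simp]
theorem mem_constructionA {C : Submodule (ZMod 2) (ι → ZMod 2)} {y : ι → ℤ} :
    y ∈ constructionA C ↔ reduction ι y ∈ C := .rfl

theorem eq_constructionA_map_reduction {S : Submodule ℤ (ι → ℤ)} (hS : constructionA ⊥ ≤ S) :
    S = constructionA (S.map (reduction ι)) :=
  (Submodule.comap_map_eq_self hS).symm

theorem map_constructionA_funCongrLeft {κ : Type*} (C : Submodule (ZMod 2) (ι → ZMod 2))
    (σ : κ ≃ ι) :
    (constructionA C).map (LinearEquiv.funCongrLeft ℤ ℤ σ).toLinearMap =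
      constructionA (C.map (LinearEquiv.funCongrLeft (ZMod 2) (ZMod 2) σ).toLinearMap) := by
  ext y
  rw [Submodule.mem_map_equiv, mem_constructionA, mem_constructionA, Submodule.mem_map_equiv]
  rfl

/-- The diagonal sign change of `ℤ^ι` with signs `s`. -/
def signChange (s : ι → ℤˣ) : (ι → ℤ) ≃ₗ[ℤ] (ι → ℤ) :=
  LinearEquiv.piCongrRight fun i ↦ LinearEquiv.smulOfUnit (s i)

theorem signChange_apply (s : ι → ℤˣ) (y : ι → ℤ) (i : ι) : signChange s y i = s i * y i := rfl

theorem reduction_signChange (s : ι → ℤˣ) (y : ι → ℤ) :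
    reduction ι (signChange s y) = reduction ι y := by
  ext i
  rcases Int.units_eq_one_or (s i) with h | h <;> simp [signChange_apply, h]

theorem signChange_signChange (s : ι → ℤˣ) (y : ι → ℤ) :
    signChange s (signChange s y) = y := by
  ext i
  rw [signChange_apply, signChange_apply, ← mul_assoc, Int.units_coe_mul_self, one_mul]

theorem map_reduction_map_signChange (S : Submodule ℤ (ι → ℤ)) (s : ι → ℤˣ) :
    (S.map (signChange s).toLinearMap).map (reduction ι) = S.map (reduction ι) := by
  rw [← Submodule.map_comp]
  congr 1
  ext1 y
  exact reduction_signChange s y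

variable [Fintype ι]

/-- The lattice obtained from a binary code by Conway and Sloane's Construction B, without their
rescaling by `1 / √2`. For the zero code it is twice the checkerboard lattice. -/
def constructionB (C : Submodule (ZMod 2) (ι → ZMod 2)) : Submodule ℤ (ι → ℤ) :=
  constructionA C ⊓
    Submodule.comap (∑ i, LinearMap.proj i : (ι → ℤ) →ₗ[ℤ] ℤ) (Ideal.span {(4 : ℤ)})

@[simp]
theorem mem_constructionB {C : Submodule (ZMod 2) (ι → ZMod 2)} {y : ι → ℤ} :
    y ∈ constructionB C ↔ reduction ι y ∈ C ∧ 4 ∣ ∑ i, y i := by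
  simp [constructionB, Ideal.mem_span_singleton]

theorem mem_constructionB_bot {y : ι → ℤ} :
    y ∈ constructionB ⊥ ↔ ∃ z : ι → ℤ, Even (∑ i, z i) ∧ y = (2 : ℤ) • z := by
  constructor
  · intro h
    obtain ⟨hy, hsum⟩ := mem_constructionB.1 h
    choose z hz using reduction_eq_zero_iff.1 hy
    refine ⟨z, ?_, funext hz⟩
    simp only [hz, ← Finset.mul_sum] at hsum
    rw [even_iff_two_dvd]
    lia
  · rintro ⟨z, ⟨k, hk⟩, rfl⟩
    refine mem_constructionB.2 ⟨?_, k, ?_⟩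
    · exact reduction_eq_zero_iff.2 fun i ↦ dvd_mul_right 2 (z i)
    · simp only [Pi.smul_apply, smul_eq_mul, ← Finset.mul_sum, hk]
      ring

theorem eq_constructionB_map_reduction {S : Submodule ℤ (ι → ℤ)} (hS : constructionB ⊥ ≤ S)
    (hsum : ∀ y ∈ S, 4 ∣ ∑ i, y i) : S = constructionB (S.map (reduction ι)) := by
  refine le_antisymm (fun y hy ↦ mem_constructionB.2 ⟨Submodule.mem_map_of_mem hy, hsum y hy⟩) ?_
  intro y hy
  obtain ⟨⟨x, hx, hxy⟩, hy4⟩ := mem_constructionB.1 hy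
  have hdiff : y - x ∈ S := by
    refine hS (mem_constructionB.2 ⟨?_, ?_⟩)
    · rw [map_sub, hxy, sub_self]
      exact zero_mem _
    · simpa only [Pi.sub_apply, Finset.sum_sub_distrib] using dvd_sub hy4 (hsum x hx)
  simpa using add_mem hdiff hx

theorem two_dvd_sum_of_reduction_eq_zero {y : ι → ℤ} (hy : reduction ι y = 0) : 2 ∣ ∑ i, y i :=
  Finset.dvd_sum fun i _ ↦ reduction_eq_zero_iff.1 hy i

-- `constructionB ⊥ = 2 D_n` has index 2 in `constructionA ⊥ = 2 ℤ^n`.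
theorem constructionA_bot_le {S : Submodule ℤ (ι → ℤ)} (hS : constructionB ⊥ ≤ S) {x : ι → ℤ}
    (hxS : x ∈ S) (hx : reduction ι x = 0) (hx4 : ¬ 4 ∣ ∑ i, x i) : constructionA ⊥ ≤ S := by
  intro y hy
  by_cases hy4 : 4 ∣ ∑ i, y i
  · exact hS (mem_constructionB.2 ⟨hy, hy4⟩)
  · have hdiff : y - x ∈ S := by
      refine hS (mem_constructionB.2 ⟨sub_mem hy hx, ?_⟩)
      have := two_dvd_sum_of_reduction_eq_zero hx
      have := two_dvd_sum_of_reduction_eq_zero hy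
      simp only [Pi.sub_apply, Finset.sum_sub_distrib]
      lia
    simpa using add_mem hdiff hxS

theorem exists_units_eq_one_sub_two_mul (a : ZMod 2) :
    ∃ (s : ℤˣ) (m : ℤ), (s : ℤ) = 1 - 2 * m ∧ (m : ZMod 2) = a := by
  obtain rfl | rfl : a = 0 ∨ a = 1 := by decide +revert
  · exact ⟨1, 0, by simp⟩
  · exact ⟨-1, 1, by simp⟩

-- `y ↦ (∑ i, y i) / 2 mod 2` factors through the code, hence is the restriction of a linear
-- functional on `𝔽₂^ι`; its coefficients say where to change signs.
theorem exists_signChange_four_dvd_sum {S : Submodule ℤ (ι → ℤ)} (hS2 : ∀ y ∈ S, 2 ∣ ∑ i, y i)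
    (hS4 : ∀ y ∈ S, reduction ι y = 0 → 4 ∣ ∑ i, y i) :
    ∃ s : ι → ℤˣ, ∀ y ∈ S, 4 ∣ ∑ i, signChange s y i := by
  classical
  let halfSum : S →+ ZMod 2 := .mk' (fun y ↦ ((∑ i, y.1 i) / 2 : ℤ)) fun x y ↦ by
    simp only [Submodule.coe_add, Pi.add_apply, Finset.sum_add_distrib,
      Int.add_ediv_of_dvd_left (hS2 x x.2), Int.cast_add]
  let codeword : S →+ (ι → ZMod 2) := ((reduction ι).comp S.subtype).toAddMonoidHom
  have hker : codeword.ker ≤ halfSum.ker := fun y hy ↦ by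
    have := hS4 y y.2 hy
    exact (ZMod.intCast_zmod_eq_zero_iff_dvd _ 2).2 (by lia)
  obtain ⟨k, hk⟩ := exists_linearMap_apply_eq_of_ker_le (p := 2) codeword halfSum hker
  choose s m hs hm using fun i : ι ↦
    exists_units_eq_one_sub_two_mul (k fun j ↦ if i = j then 1 else 0)
  refine ⟨s, fun y hy ↦ ?_⟩
  have hhalf : (((∑ i, y i) / 2 - ∑ i, m i * y i : ℤ) : ZMod 2) = 0 := by
    have hky : k (reduction ι y) = (((∑ i, y i) / 2 : ℤ) : ZMod 2) := hk ⟨y, hy⟩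
    rw [LinearMap.pi_apply_eq_sum_univ] at hky
    simp only [reduction_apply, ← hm, smul_eq_mul] at hky
    rw [Int.cast_sub, ← hky, Int.cast_sum, sub_eq_zero]
    exact Finset.sum_congr rfl fun i _ ↦ by rw [Int.cast_mul, mul_comm]
  have hsum : ∑ i, signChange s y i = ∑ i, y i - 2 * ∑ i, m i * y i := by
    simp only [signChange_apply, hs, Finset.mul_sum, ← Finset.sum_sub_distrib]
    exact Finset.sum_congr rfl fun i _ ↦ by ring
  have h2 := (ZMod.intCast_zmod_eq_zero_iff_dvd _ 2).1 hhalf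
  have := hS2 y hy
  lia

theorem signChange_mem_constructionB_bot (s : ι → ℤˣ) {y : ι → ℤ} (hy : y ∈ constructionB ⊥) :
    signChange s y ∈ constructionB ⊥ := by
  obtain ⟨z, hz, rfl⟩ := mem_constructionB_bot.1 hy
  refine mem_constructionB_bot.2 ⟨signChange s z, ?_, map_smul (signChange s) 2 z⟩
  have hparity (i : ι) : Even (signChange s z i - z i) := by
    rcases Int.units_eq_one_or (s i) with h | h <;> simp [signChange_apply, h, Int.even_sub]
  have := Finset.even_sum (s := Finset.univ) _ fun i _ ↦ hparity i
  rw [Finset.sum_sub_distrib] at this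
  exact (Int.even_sub.1 this).2 hz

theorem constructionB_bot_le_map_signChange {S : Submodule ℤ (ι → ℤ)} (hS : constructionB ⊥ ≤ S)
    (s : ι → ℤˣ) : constructionB ⊥ ≤ S.map (signChange s).toLinearMap :=
  fun y hy ↦ ⟨signChange s y, hS (signChange_mem_constructionB_bot s hy),
    signChange_signChange s y⟩

theorem eq_constructionA_or_exists_signChange {S : Submodule ℤ (ι → ℤ)} (hS : constructionB ⊥ ≤ S)
    (hS2 : ∀ y ∈ S, 2 ∣ ∑ i, y i) :
    S = constructionA (S.map (reduction ι)) ∨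
      ∃ s, S.map (signChange s).toLinearMap = constructionB (S.map (reduction ι)) := by
  by_cases hS4 : ∀ y ∈ S, reduction ι y = 0 → 4 ∣ ∑ i, y i
  · obtain ⟨s, hs⟩ := exists_signChange_four_dvd_sum hS2 hS4
    refine .inr ⟨s, ?_⟩
    rw [← map_reduction_map_signChange S s]
    refine eq_constructionB_map_reduction (constructionB_bot_le_map_signChange hS s) ?_
    rintro _ ⟨y, hy, rfl⟩
    exact hs y hy
  · push Not at hS4
    obtain ⟨x, hxS, hx, hx4⟩ := hS4
    exact .inl (eq_constructionA_map_reduction (constructionA_bot_le hS hxS hx hx4))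

theorem map_constructionB_funCongrLeft {κ : Type*} [Fintype κ]
    (C : Submodule (ZMod 2) (ι → ZMod 2)) (σ : κ ≃ ι) :
    (constructionB C).map (LinearEquiv.funCongrLeft ℤ ℤ σ).toLinearMap =
      constructionB (C.map (LinearEquiv.funCongrLeft (ZMod 2) (ZMod 2) σ).toLinearMap) := by
  ext y
  rw [Submodule.mem_map_equiv, mem_constructionB, mem_constructionB, Submodule.mem_map_equiv]
  exact and_congr .rfl (by rw [← Equiv.sum_comp σ.symm y]; rfl)

theorem map_reduction_constructionB_bot_sup_span (G : Set (ι → ℤ)) :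
    (constructionB ⊥ ⊔ Submodule.span ℤ G).map (reduction ι) =
      Submodule.span (ZMod 2) (reduction ι '' G) := by
  have hbot : (constructionB ⊥).map (reduction ι) = ⊥ :=
    (Submodule.map_le_iff_le_comap.2 inf_le_left).antisymm bot_le
  rw [Submodule.map_sup, hbot, bot_sup_eq, Submodule.map_span]

theorem constructionB_span_reduction {G : Set (ι → ℤ)} (hG : ∀ y ∈ G, 4 ∣ ∑ i, y i) :
    constructionB (Submodule.span (ZMod 2) (reduction ι '' G)) =
      constructionB ⊥ ⊔ Submodule.span ℤ G := by
  rw [← map_reduction_constructionB_bot_sup_span]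
  refine (eq_constructionB_map_reduction le_sup_left fun y hy ↦ ?_).symm
  have hle : constructionB ⊥ ⊔ Submodule.span ℤ G ≤ constructionB ⊤ :=
    sup_le (inf_le_inf_right _ (Submodule.comap_mono bot_le))
      (Submodule.span_le.2 fun y hy ↦ mem_constructionB.2 ⟨Submodule.mem_top, hG y hy⟩)
  exact (mem_constructionB.1 (hle hy)).2

theorem constructionA_span_reduction {G : Set (ι → ℤ)} {x : ι → ℤ} (hxG : x ∈ Submodule.span ℤ G)
    (hx : reduction ι x = 0) (hx4 : ¬ 4 ∣ ∑ i, x i) :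
    constructionA (Submodule.span (ZMod 2) (reduction ι '' G)) =
      constructionB ⊥ ⊔ Submodule.span ℤ G := by
  rw [← map_reduction_constructionB_bot_sup_span]
  exact (eq_constructionA_map_reduction
    (constructionA_bot_le le_sup_left (Submodule.mem_sup_right hxG) hx hx4)).symm

theorem isSelfOrthogonal_map_reduction {S : Submodule ℤ (ι → ℤ)}
    (hS : ∀ x ∈ S, ∀ y ∈ S, 2 ∣ x ⬝ᵥ y) : IsSelfOrthogonal (S.map (reduction ι)) := by
  rintro _ ⟨x, hx, rfl⟩ _ ⟨y, hy, rfl⟩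
  rw [← (ZMod.intCast_zmod_eq_zero_iff_dvd _ 2).2 (hS x hx y hy)]
  exact (RingHom.map_dotProduct (Int.castRingHom (ZMod 2)) x y).symm

theorem two_dvd_sum_of_isSelfOrthogonal {S : Submodule ℤ (ι → ℤ)}
    (hS : IsSelfOrthogonal (S.map (reduction ι))) {y : ι → ℤ} (hy : y ∈ S) : 2 ∣ ∑ i, y i := by
  refine (ZMod.intCast_zmod_eq_zero_iff_dvd _ 2).1 ?_
  rw [Int.cast_sum]
  exact hS.sum_eq_zero (Submodule.mem_map_of_mem hy)

end Constructions

section Isometries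

variable {n : ℕ}

theorem IsometricLattices.refl (L : Submodule ℤ (E n)) : IsometricLattices L L :=
  ⟨.refl ℝ (E n), by simp⟩

theorem IsometricLattices.trans {L M N : Submodule ℤ (E n)} (h : IsometricLattices L M)
    (h' : IsometricLattices M N) : IsometricLattices L N := by
  obtain ⟨g, hg⟩ := h
  obtain ⟨g', hg'⟩ := h'
  exact ⟨g.trans g', by rw [← hg', ← hg, Set.image_image]; rfl⟩

/-- The lattice embedding `y ↦ y / √2` of `ℤ^n` into Euclidean space, in whose coordinates the
lattices of the theorem become Constructions A and B. -/
def scaledIntVec (n : ℕ) : (Fin n → ℤ) →ₗ[ℤ] E n where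
  toFun y := (√2)⁻¹ • intVec y
  map_add' x y := by
    ext i
    simp [intVec, mul_add]
  map_smul' a y := by
    ext i
    simp [intVec, mul_left_comm]

theorem scaledIntVec_apply (y : Fin n → ℤ) (i : Fin n) :
    scaledIntVec n y i = (√2)⁻¹ * y i := rfl

theorem scaledIntVec_two_smul (z : Fin n → ℤ) :
    scaledIntVec n ((2 : ℤ) • z) = √2 • intVec z := by
  ext i
  have h2 : (√2)⁻¹ * 2 = √2 := by rw [inv_mul_eq_div, Real.div_sqrt]
  rw [scaledIntVec_apply, Pi.smul_apply, smul_eq_mul, Int.cast_mul, ← mul_assoc, Int.cast_ofNat, h2]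
  rfl

theorem inner_scaledIntVec (x : E n) (y : Fin n → ℤ) :
    ⟪x, scaledIntVec n y⟫ = (√2)⁻¹ * ∑ i, x i * y i := by
  simp only [PiLp.inner_apply, scaledIntVec_apply, RCLike.inner_apply, conj_trivial,
    Finset.mul_sum]
  exact Finset.sum_congr rfl fun i _ ↦ by ring

theorem inner_scaledIntVec_scaledIntVec (x y : Fin n → ℤ) :
    ⟪scaledIntVec n x, scaledIntVec n y⟫ = ((x ⬝ᵥ y : ℤ) : ℝ) / 2 := by
  have h2 : (√2)⁻¹ * (√2)⁻¹ = 2⁻¹ := by rw [← mul_inv, Real.mul_self_sqrt zero_le_two]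
  simp only [inner_scaledIntVec, scaledIntVec_apply, mul_assoc, ← Finset.mul_sum]
  rw [← mul_assoc, h2, inv_mul_eq_div, dotProduct]
  push_cast
  rfl

theorem isometricLattices_map_scaledIntVec (g : E n ≃ₗᵢ[ℝ] E n)
    (e : (Fin n → ℤ) ≃ₗ[ℤ] (Fin n → ℤ))
    (h : ∀ y, g (scaledIntVec n y) = scaledIntVec n (e y)) (S : Submodule ℤ (Fin n → ℤ)) :
    IsometricLattices (S.map (scaledIntVec n)) ((S.map e.toLinearMap).map (scaledIntVec n)) := by
  refine ⟨g, ?_⟩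
  simp only [Submodule.map_coe, Set.image_image, h]
  rfl

theorem isometricLattices_map_signChange (S : Submodule ℤ (Fin n → ℤ)) (s : Fin n → ℤˣ) :
    IsometricLattices (S.map (scaledIntVec n))
      ((S.map (signChange s).toLinearMap).map (scaledIntVec n)) := by
  refine isometricLattices_map_scaledIntVec (LinearIsometryEquiv.piLpCongrRight 2
    fun i ↦ if s i = 1 then .refl ℝ ℝ else .neg ℝ) _ (fun y ↦ ?_) S
  ext i
  rw [LinearIsometryEquiv.piLpCongrRight_apply]
  rcases Int.units_eq_one_or (s i) with h | h <;>
    simp [h, scaledIntVec_apply, signChange_apply]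

theorem isometricLattices_map_funCongrLeft (S : Submodule ℤ (Fin n → ℤ))
    (σ : Equiv.Perm (Fin n)) :
    IsometricLattices (S.map (scaledIntVec n))
      ((S.map (LinearEquiv.funCongrLeft ℤ ℤ σ).toLinearMap).map (scaledIntVec n)) :=
  isometricLattices_map_scaledIntVec (LinearIsometryEquiv.piLpCongrLeft 2 ℝ ℝ σ.symm) _
    (fun _ ↦ rfl) S

end Isometries

section Overlattices

variable {n : ℕ} {L : Submodule ℤ (E n)}

theorem exists_int_sqrt_two_mul_add (hL : LatticeIsIntegral L)
    (hD : (constructionB ⊥).map (scaledIntVec n) ≤ L) {x : E n} (hx : x ∈ L) (i j : Fin n) :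
    ∃ k : ℤ, √2 * (x i + x j) = k := by
  let e : Fin n → ℤ := Pi.single i 1 + Pi.single j 1
  have he : (2 : ℤ) • e ∈ constructionB ⊥ :=
    mem_constructionB_bot.2 ⟨e, by simp [e, Finset.sum_add_distrib], rfl⟩
  obtain ⟨k, hk⟩ := hL x hx _ (hD (Submodule.mem_map_of_mem he))
  refine ⟨k, ?_⟩
  rw [← hk, scaledIntVec_two_smul, inner_smul_right]
  simp [e, intVec, PiLp.inner_apply, add_mul, Finset.sum_add_distrib, Pi.single_apply]

theorem eight_dvd_of_forall_odd {k : Fin n → ℤ} (hk : ∀ i, Odd (k i)) (h8 : 8 ∣ ∑ i, k i ^ 2) :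
    8 ∣ n := by
  have hsub : 8 ∣ ∑ i, (k i ^ 2 - 1) :=
    Finset.dvd_sum fun i _ ↦ Int.eight_dvd_sq_sub_one_of_odd (hk i)
  rw [Finset.sum_sub_distrib, Finset.sum_const, Finset.card_univ, Fintype.card_fin, nsmul_one,
    dvd_sub_right h8] at hsub
  exact_mod_cast hsub

theorem exists_int_eq_two_mul_sqrt_two_mul (hL : LatticeIsIntegral L)
    (hD : (constructionB ⊥).map (scaledIntVec n) ≤ L) {x : E n} (hx : x ∈ L) :
    ∃ m : Fin n → ℤ, (∀ i, (m i : ℝ) = 2 * √2 * x i) ∧ ∀ i j, Even (m i + m j) := by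
  choose k hk using exists_int_sqrt_two_mul_add hL hD hx
  have hdiag (i : Fin n) : (k i i : ℝ) = 2 * √2 * x i := by
    rw [← hk]
    ring
  refine ⟨fun i ↦ k i i, hdiag, fun i j ↦ ⟨k i j, ?_⟩⟩
  have : (k i i + k j j : ℝ) = k i j + k i j := by
    rw [hdiag, hdiag, ← hk]
    ring
  exact_mod_cast this

theorem eight_dvd_sum_sq (hL : LatticeIsIntegral L) {x : E n} (hx : x ∈ L) {m : Fin n → ℤ}
    (hm : ∀ i, (m i : ℝ) = 2 * √2 * x i) : 8 ∣ ∑ i, m i ^ 2 := by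
  have h2 : √2 * √2 = 2 := Real.mul_self_sqrt zero_le_two
  obtain ⟨q, hq⟩ := hL x hx x hx
  have hsq : ∑ i, (m i : ℝ) ^ 2 = 8 * q := by
    rw [← hq, PiLp.inner_apply, Finset.mul_sum]
    refine Finset.sum_congr rfl fun i _ ↦ ?_
    rw [hm, RCLike.inner_apply, conj_trivial]
    linear_combination 4 * x i ^ 2 * h2
  exact ⟨q, by exact_mod_cast hsq⟩

-- The coordinates of `2√2 x` are integers of equal parity; they are even, for otherwise
-- `8 ⟪x, x⟫` would be a sum of `n` odd squares.
theorem mem_range_scaledIntVec (hn : ¬ 8 ∣ n) (hL : LatticeIsIntegral L)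
    (hD : (constructionB ⊥).map (scaledIntVec n) ≤ L) {x : E n} (hx : x ∈ L) :
    x ∈ (scaledIntVec n).range := by
  obtain ⟨m, hm, hparity⟩ := exists_int_eq_two_mul_sqrt_two_mul hL hD hx
  obtain ⟨j, hj⟩ : ∃ j, ¬ Odd (m j) := by
    by_contra! hodd
    exact hn (eight_dvd_of_forall_odd hodd (eight_dvd_sum_sq hL hx hm))
  have heven (i : Fin n) : 2 ∣ m i :=
    even_iff_two_dvd.1 ((Int.even_add.1 (hparity i j)).2 (Int.not_odd_iff_even.1 hj))
  choose y hy using heven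
  refine ⟨y, ?_⟩
  ext i
  have hyi : (2 : ℝ) * y i = 2 * √2 * x i := by
    rw [← hm]
    exact_mod_cast (hy i).symm
  rw [scaledIntVec_apply, inv_mul_eq_iff_eq_mul₀ (by positivity)]
  linarith

theorem two_dvd_dotProduct {S : Submodule ℤ (Fin n → ℤ)}
    (hS : LatticeIsIntegral (S.map (scaledIntVec n))) (x : Fin n → ℤ) (hx : x ∈ S)
    (y : Fin n → ℤ) (hy : y ∈ S) : 2 ∣ x ⬝ᵥ y := by
  obtain ⟨k, hk⟩ := hS _ (Submodule.mem_map_of_mem hx) _ (Submodule.mem_map_of_mem hy)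
  rw [inner_scaledIntVec_scaledIntVec, div_eq_iff two_ne_zero, mul_comm] at hk
  exact ⟨k, by exact_mod_cast hk⟩

theorem exists_isometricLattices_construction (hn : ¬ 8 ∣ n) (hL : LatticeIsIntegral L)
    (hD : (constructionB ⊥).map (scaledIntVec n) ≤ L) :
    ∃ C, IsSelfOrthogonal C ∧
      (IsometricLattices L ((constructionA C).map (scaledIntVec n)) ∨
        IsometricLattices L ((constructionB C).map (scaledIntVec n))) := by
  obtain ⟨S, hSL, hSB⟩ : ∃ S, S.map (scaledIntVec n) = L ∧ constructionB ⊥ ≤ S :=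
    ⟨L.comap (scaledIntVec n),
      Submodule.map_comap_eq_self fun x hx ↦ mem_range_scaledIntVec hn hL hD hx,
      Submodule.map_le_iff_le_comap.1 hD⟩
  have hC : IsSelfOrthogonal (S.map (reduction (Fin n))) :=
    isSelfOrthogonal_map_reduction (two_dvd_dotProduct (hSL.symm ▸ hL))
  have hS2 : ∀ y ∈ S, 2 ∣ ∑ i, y i := fun y hy ↦ two_dvd_sum_of_isSelfOrthogonal hC hy
  refine ⟨_, hC, ?_⟩
  rw [← hSL]
  rcases eq_constructionA_or_exists_signChange hSB hS2 with hA | ⟨s, hB⟩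
  · exact .inl (hA ▸ .refl _)
  · exact .inr (hB ▸ isometricLattices_map_signChange S s)

end Overlattices

section FiveDimensional

theorem Λ5_eq_map_constructionB_bot : Λ5 = (constructionB ⊥).map (scaledIntVec 5) := by
  refine le_antisymm (Submodule.span_le.2 ?_) ?_
  · rintro _ ⟨z, hz, rfl⟩
    refine ⟨(2 : ℤ) • z, mem_constructionB_bot.2 ⟨z, ?_, rfl⟩, scaledIntVec_two_smul z⟩
    rwa [Fin.sum_univ_five]
  · rintro _ ⟨y, hy, rfl⟩
    obtain ⟨z, hz, rfl⟩ := mem_constructionB_bot.1 hy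
    rw [Fin.sum_univ_five] at hz
    exact Submodule.subset_span ⟨z, hz, scaledIntVec_two_smul z⟩

theorem exists_isometricLattices_construction_five {L : Submodule ℤ (E 5)}
    (hL : LatticeIsIntegral L) (hΛ : Λ5 ≤ L) :
    ∃ C ∈ standardSelfOrthogonalCodes,
      IsometricLattices L ((constructionA C).map (scaledIntVec 5)) ∨
        IsometricLattices L ((constructionB C).map (scaledIntVec 5)) := by
  rw [Λ5_eq_map_constructionB_bot] at hΛ
  obtain ⟨C, hC, h⟩ := exists_isometricLattices_construction (by norm_num) hL hΛ
  obtain ⟨σ, hσ⟩ := exists_perm_map_mem_standardSelfOrthogonalCodes hC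
  refine ⟨_, hσ, ?_⟩
  rw [← map_constructionA_funCongrLeft, ← map_constructionB_funCongrLeft]
  exact h.imp (·.trans (isometricLattices_map_funCongrLeft _ σ))
    (·.trans (isometricLattices_map_funCongrLeft _ σ))

theorem Λ5_sup_span_image_eq_map_constructionB {G : Set (Fin 5 → ℤ)}
    (hG : ∀ y ∈ G, 4 ∣ ∑ i, y i) :
    Λ5 ⊔ Submodule.span ℤ (scaledIntVec 5 '' G) =
      (constructionB (Submodule.span (ZMod 2) (reduction (Fin 5) '' G))).map (scaledIntVec 5) := by
  rw [constructionB_span_reduction hG, Submodule.map_sup, Submodule.map_span,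
    Λ5_eq_map_constructionB_bot]

theorem Λ5_sup_span_image_eq_map_constructionA {G : Set (Fin 5 → ℤ)} {x : Fin 5 → ℤ}
    (hxG : x ∈ Submodule.span ℤ G) (hx : reduction (Fin 5) x = 0) (hx4 : ¬ 4 ∣ ∑ i, x i) :
    Λ5 ⊔ Submodule.span ℤ (scaledIntVec 5 '' G) =
      (constructionA (Submodule.span (ZMod 2) (reduction (Fin 5) '' G))).map (scaledIntVec 5) := by
  rw [constructionA_span_reduction hxG hx hx4, Submodule.map_sup, Submodule.map_span,
    Λ5_eq_map_constructionB_bot]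

theorem scaledIntVec_eq_u1 : scaledIntVec 5 ![1, -1, 0, 0, 0] = u1 := by
  ext i; fin_cases i <;> simp [scaledIntVec_apply, u1, εv]

theorem scaledIntVec_eq_u3 : scaledIntVec 5 ![0, 0, 1, -1, 0] = u3 := by
  ext i; fin_cases i <;> simp [scaledIntVec_apply, u3, εv]

theorem scaledIntVec_eq_w : scaledIntVec 5 ![1, -1, 1, -1, 0] = w := by
  ext i; fin_cases i <;> simp [scaledIntVec_apply, w, εv]

theorem scaledIntVec_eq_f1 : scaledIntVec 5 ![1, 1, 0, 0, 0] = f1 := by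
  ext i; fin_cases i <;> simp [scaledIntVec_apply, f1, εv]

theorem scaledIntVec_eq_t : scaledIntVec 5 ![0, 0, 0, 2, 0] = t := by
  ext i; fin_cases i <;> simp [scaledIntVec_apply, t, εv, inv_mul_eq_div]

theorem Λ5_sup_span_u1 :
    Λ5 ⊔ Submodule.span ℤ {u1} =
      (constructionB (Submodule.span (ZMod 2) {![1, 1, 0, 0, 0]})).map (scaledIntVec 5) := by
  have h := Λ5_sup_span_image_eq_map_constructionB (G := {![1, -1, 0, 0, 0]})
    (by simp [Fin.sum_univ_five])
  simpa [scaledIntVec_eq_u1, CharTwo.neg_eq] using h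

theorem Λ5_sup_span_w :
    Λ5 ⊔ Submodule.span ℤ {w} =
      (constructionB (Submodule.span (ZMod 2) {![1, 1, 1, 1, 0]})).map (scaledIntVec 5) := by
  have h := Λ5_sup_span_image_eq_map_constructionB (G := {![1, -1, 1, -1, 0]})
    (by simp [Fin.sum_univ_five])
  simpa [scaledIntVec_eq_w, CharTwo.neg_eq] using h

theorem Λ5_sup_span_t :
    Λ5 ⊔ Submodule.span ℤ {t} = (constructionA ⊥).map (scaledIntVec 5) := by
  have ht : reduction (Fin 5) ![0, 0, 0, 2, 0] = 0 := by simp [CharTwo.two_eq_zero]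
  have h := Λ5_sup_span_image_eq_map_constructionA
    (Submodule.mem_span_singleton_self ![0, 0, 0, 2, 0]) ht (by simp [Fin.sum_univ_five])
  simpa only [Set.image_singleton, scaledIntVec_eq_t, ht,
    Submodule.span_zero_singleton] using h

theorem Λ5_sup_span_u1_u3 :
    Λ5 ⊔ Submodule.span ℤ {u1, u3} =
      (constructionB (Submodule.span (ZMod 2) {![1, 1, 0, 0, 0], ![0, 0, 1, 1, 0]})).map
        (scaledIntVec 5) := by
  have h := Λ5_sup_span_image_eq_map_constructionB (G := {![1, -1, 0, 0, 0], ![0, 0, 1, -1, 0]})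
    (by simp [Fin.sum_univ_five])
  simpa [Set.image_pair, scaledIntVec_eq_u1, scaledIntVec_eq_u3, CharTwo.neg_eq] using h

theorem f1_sub_u1_mem_span {G : Set (Fin 5 → ℤ)} (hu1 : ![1, -1, 0, 0, 0] ∈ G)
    (hf1 : ![1, 1, 0, 0, 0] ∈ G) : ![0, 2, 0, 0, 0] ∈ Submodule.span ℤ G := by
  have h_sub : (![0, 2, 0, 0, 0] : Fin 5 → ℤ) = ![1, 1, 0, 0, 0] - ![1, -1, 0, 0, 0] := by decide
  rw [h_sub]
  exact sub_mem (Submodule.subset_span hf1) (Submodule.subset_span hu1)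

theorem Λ5_sup_span_u1_f1 :
    Λ5 ⊔ Submodule.span ℤ {u1, f1} =
      (constructionA (Submodule.span (ZMod 2) {![1, 1, 0, 0, 0]})).map (scaledIntVec 5) := by
  have h := Λ5_sup_span_image_eq_map_constructionA
    (G := {![1, -1, 0, 0, 0], ![1, 1, 0, 0, 0]})
    (f1_sub_u1_mem_span (by simp) (by simp)) (by simp [CharTwo.two_eq_zero])
    (by simp [Fin.sum_univ_five])
  simpa [Set.image_pair, scaledIntVec_eq_u1, scaledIntVec_eq_f1, CharTwo.neg_eq] using h

theorem Λ5_sup_span_w_t :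
    Λ5 ⊔ Submodule.span ℤ {w, t} =
      (constructionA (Submodule.span (ZMod 2) {![1, 1, 1, 1, 0]})).map (scaledIntVec 5) := by
  have hw : reduction (Fin 5) ![1, -1, 1, -1, 0] = ![1, 1, 1, 1, 0] := by simp [CharTwo.neg_eq]
  have ht : reduction (Fin 5) ![0, 0, 0, 2, 0] = 0 := by simp [CharTwo.two_eq_zero]
  have h := Λ5_sup_span_image_eq_map_constructionA
    (G := {![0, 0, 0, 2, 0], ![1, -1, 1, -1, 0]}) (Submodule.subset_span (Set.mem_insert _ _))
    ht (by simp [Fin.sum_univ_five])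
  rw [Set.pair_comm]
  simpa only [Set.image_pair, scaledIntVec_eq_w, scaledIntVec_eq_t, ht, hw,
    Submodule.span_insert_zero] using h

theorem Λ5_sup_span_u1_u3_f1 :
    Λ5 ⊔ Submodule.span ℤ {u1, u3, f1} =
      (constructionA (Submodule.span (ZMod 2) {![1, 1, 0, 0, 0], ![0, 0, 1, 1, 0]})).map
        (scaledIntVec 5) := by
  have h := Λ5_sup_span_image_eq_map_constructionA
    (G := {![1, -1, 0, 0, 0], ![0, 0, 1, -1, 0], ![1, 1, 0, 0, 0]})
    (f1_sub_u1_mem_span (by simp) (by simp)) (by simp [CharTwo.two_eq_zero])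
    (by simp [Fin.sum_univ_five])
  rw [Set.pair_comm ![1, 1, 0, 0, 0]]
  simpa [Set.image_insert_eq, scaledIntVec_eq_u1, scaledIntVec_eq_u3, scaledIntVec_eq_f1,
    CharTwo.neg_eq] using h

end FiveDimensional

/-- Every integral lattice in `ℝ⁵` containing `Λ₅` is isometric to one of the eight
lattices `Λ₅`, `⟨Λ₅,u1⟩`, `⟨Λ₅,w⟩`, `⟨Λ₅,t⟩`, `⟨Λ₅,u1,u3⟩`, `⟨Λ₅,u1,f1⟩`, `⟨Λ₅,w,t⟩`,
`⟨Λ₅,u1,u3,f1⟩`. -/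
theorem integral_lattices_containing_Λ5 (L : Submodule ℤ (E 5))
    (hL : LatticeIsIntegral L) (hΛ : Λ5 ≤ L) :
    IsometricLattices L Λ5 ∨
    IsometricLattices L (Λ5 ⊔ Submodule.span ℤ {u1}) ∨
    IsometricLattices L (Λ5 ⊔ Submodule.span ℤ {w}) ∨
    IsometricLattices L (Λ5 ⊔ Submodule.span ℤ {t}) ∨
    IsometricLattices L (Λ5 ⊔ Submodule.span ℤ {u1, u3}) ∨
    IsometricLattices L (Λ5 ⊔ Submodule.span ℤ {u1, f1}) ∨
    IsometricLattices L (Λ5 ⊔ Submodule.span ℤ {w, t}) ∨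
    IsometricLattices L (Λ5 ⊔ Submodule.span ℤ {u1, u3, f1}) := by
  obtain ⟨C, hC, h⟩ := exists_isometricLattices_construction_five hL hΛ
  rw [Λ5_sup_span_u1, Λ5_sup_span_w, Λ5_sup_span_t, Λ5_sup_span_u1_u3, Λ5_sup_span_u1_f1,
    Λ5_sup_span_w_t, Λ5_sup_span_u1_u3_f1, Λ5_eq_map_constructionB_bot]
  rcases hC with rfl | rfl | rfl | rfl <;> tauto
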